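/- Let D ⊆ ℝⁿ, let f : ℝⁿ → ℝ be defined on D, and let μ : ℕ → ℕ be a uniform modulus of continuity of f on D. Let δ > 0 be rational, let p ∈ ℕ satisfy 2^{-p} ≤ δ/4, let x ∈ D, and let ỹ ∈ ℝ satisfy |ỹ − f(x)| ≤ δ/4. Then: (i) if ỹ ≥ −δ/2, then f(x) ≥ −δ (the δ-weakened constraint f(x) ≥ −δ holds at x); and (ii) if ỹ < −δ/2, then f(x) < 0 and moreover f(z) < 0 for every z ∈ D with ‖z − x‖ ≤ 2^{-μ(p)} (so the clause excluding the ball B(x, 2^{-μ(p)}) is a valid linearisation of the constraint f(x) ≥ 0 on D). -/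

import Mathlib

/-!
The threshold `-δ/2` pays for two errors of size at most `δ/4`: the error of the approximation
`ỹ` of `f x`, and the oscillation of `f` on the box around `x`. So `ỹ < -δ/2` forces
`f x < -δ/4`, and moving within the box cannot lift this value to `0`.
-/

section Approximation

theorem neg_of_lt_neg_of_abs_sub_le {G : Type*} [AddCommGroup G] [LinearOrder G]
    [IsOrderedAddMonoid G] {a b ε : G} (ha : a < -ε) (hab : |b - a| ≤ ε) : b < 0 :=
  calc
    b ≤ ε + a := sub_le_iff_le_add.mp (le_of_abs_le hab)
    _ < 0 := lt_neg_iff_add_neg'.mp ha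

variable {K : Type*} [Field K] [LinearOrder K] [IsStrictOrderedRing K] {a y δ : K}

theorem neg_le_of_neg_half_le_of_abs_sub_le (hy : |y - a| ≤ δ / 4) (h : -δ / 2 ≤ y) :
    -δ ≤ a := by
  have hδ : 0 ≤ δ / 4 := (abs_nonneg _).trans hy
  have hya : y - a ≤ δ / 4 := le_of_abs_le hy
  linarith

theorem lt_neg_quarter_of_lt_neg_half_of_abs_sub_le (hy : |y - a| ≤ δ / 4) (h : y < -δ / 2) :
    a < -(δ / 4) := by
  have hay : -(δ / 4) ≤ y - a := neg_le_of_abs_le hy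
  linarith

end Approximation

theorem linearise_correct_general {X K : Type*} [PseudoMetricSpace X] [Field K] [LinearOrder K]
    [IsStrictOrderedRing K] {D : Set X} {f : X → K} {x : X} {r : ℝ} {δ ytil : K}
    (hf : ∀ z ∈ D, dist z x ≤ r → |f z - f x| ≤ δ / 4) (hy : |ytil - f x| ≤ δ / 4) :
    (-δ / 2 ≤ ytil → -δ ≤ f x) ∧
    (ytil < -δ / 2 → f x < 0 ∧ ∀ z ∈ D, dist z x ≤ r → f z < 0) := by
  refine ⟨neg_le_of_neg_half_le_of_abs_sub_le hy, fun h => ?_⟩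
  have hfx : f x < -(δ / 4) := lt_neg_quarter_of_lt_neg_half_of_abs_sub_le hy h
  have hδ : 0 ≤ δ / 4 := (abs_nonneg _).trans hy
  exact ⟨hfx.trans_le (neg_nonpos.mpr hδ),
    fun z hz hzx => neg_of_lt_neg_of_abs_sub_le hfx (hf z hz hzx)⟩

/-- Correctness of the full-box linearisation step: with a uniform modulus of
continuity `μ` of `f` on `D`, a precision `p` with `2^{-p} ≤ δ/4`, and an
approximation `ỹ` of `f(x)` accurate to `δ/4`: if `ỹ ≥ -δ/2` then the δ-weakening
`f(x) ≥ -δ` holds; if `ỹ < -δ/2` then `f(x) < 0`, and `f(z) < 0` for every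
`z ∈ D` with `‖z - x‖ ≤ 2^{-μ(p)}`. -/
theorem linearise_correct (n : ℕ) (D : Set (Fin n → ℝ)) (f : (Fin n → ℝ) → ℝ)
    (μ : ℕ → ℕ)
    (hμ : ∀ k : ℕ, ∀ y ∈ D, ∀ z ∈ D,
      ‖y - z‖ ≤ ((2 : ℝ) ^ (μ k))⁻¹ → |f y - f z| ≤ ((2 : ℝ) ^ k)⁻¹)
    (δ : ℚ) (hδ : 0 < δ) (p : ℕ) (hp : ((2 : ℝ) ^ p)⁻¹ ≤ (δ : ℝ) / 4)
    (x : Fin n → ℝ) (hx : x ∈ D) (ytil : ℝ) (hy : |ytil - f x| ≤ (δ : ℝ) / 4) :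
    (-(δ : ℝ) / 2 ≤ ytil → -(δ : ℝ) ≤ f x) ∧
    (ytil < -(δ : ℝ) / 2 →
      f x < 0 ∧ ∀ z ∈ D, ‖z - x‖ ≤ ((2 : ℝ) ^ (μ p))⁻¹ → f z < 0) := by
  simp only [← dist_eq_norm] at hμ ⊢
  exact linearise_correct_general (fun z hz hzx => (hμ p z hz x hx hzx).trans hp) hy
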